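/- Let L be a CW complex of finite type with finite fundamental group which is not homotopy dominated by a finite CW complex (for instance L = ℝP^∞), and let K = L ∨ S² be the wedge of L with the 2-sphere. Then the class of compact metrizable spaces X with K ∈ AE(X) contains a universal space: there exists a compact metrizable space Y with K ∈ AE(Y) such that every compact metrizable space X with K ∈ AE(X) admits a topological embedding into Y. (In particular, Conjecture A of Dydak fails for K.) -/

import Mathlib

/-!
The class of compact metrizable `X` with `K ∈ AE(X)` is first described by countably many compact
targets. A wedge is an absolute extensor of `X` exactly when both of its summands are
(`exists_wedge_retraction`, `isAE_of_wedge`), so `K ∈ AE(X)` means `L ∈ AE(X)` and `S² ∈ AE(X)`.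
By suspension `S² ∈ AE(X)` gives `S^m ∈ AE(X)` for all `m ≥ 2` (`isAE_sphere_of_le`), so maps of
`X` can be pushed off cells of dimension at least `3` (`CellAttach.push`). Since compact subsets
of `L` lie in skeleta, `K ∈ AE(X)` is thus equivalent to: `S²` and all skeleta of `L` of
sufficiently large dimension are absolute extensors of `X` (`CWStructure.isAE_skel`). By finite
type the skeleta are finite complexes, hence compact neighbourhood retracts of Euclidean spaces;
this is proved one cell at a time, with an explicit retraction (`CellAttach.isNR`).

For countably many compact neighbourhood retracts `R j ⊆ ℝ^N` a universal space is built in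
`exists_universal`. Let `S` be the disjoint union of all members of the class that are closed
subsets of the Hilbert cube, and let `D` be a countable ring of bounded continuous functions on
`S` which contains the coordinates and the rational constants, and which contains, with `u`, the
coordinates of some map `h : S → R j` that equals the retraction of `u` wherever `u` is close to
`R j`. The universal space `Y` is the closure of the image of `S` in `ℝ^D`; it is compact and
metrizable, and each member of the class embeds in it. By Stone–Weierstrass the coordinates
are dense in `C(Y, ℝ)`, so each extension problem `A → R j` on `Y` has an approximate solution
coming from `D`, and as `R j` is a neighbourhood retract the approximate solution can be
corrected to an exact one (`IsTarget.isAE_of_dense`).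
-/

open Metric Topology TopologicalSpace

universe u v w

/-- `K ∈ AE(X)`: every continuous map from a closed subset of `X` to `K` extends to `X`. -/
def IsAE (K : Type u) [TopologicalSpace K] (X : Type v) [TopologicalSpace X] : Prop :=
  ∀ A : Set X, IsClosed A → ∀ f : C(A, K), ∃ F : C(X, K), ∀ a : A, F a = f a

/-- `K` is homotopy dominated by `F`. -/
def HomotopyDominatedBy (K : Type u) [TopologicalSpace K] (F : Type v) [TopologicalSpace F] :
    Prop :=
  ∃ (i : C(K, F)) (d : C(F, K)), (d.comp i).Homotopic (ContinuousMap.id K)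

/-- The `n`-sphere, as the unit sphere of `ℝ^(n+1)`. -/
abbrev Sphere (n : ℕ) : Type := Metric.sphere (0 : EuclideanSpace ℝ (Fin (n + 1))) 1

/-- The closed `n`-disk. -/
abbrev Disk (n : ℕ) : Type := Metric.closedBall (0 : EuclideanSpace ℝ (Fin n)) 1

/-- A CW structure on a (Hausdorff) topological space `X`: a family of cells with
characteristic maps satisfying the usual axioms (embedding on interiors, the open cells
partition `X`, closure finiteness, weak topology). -/
structure CWStructure (X : Type u) [TopologicalSpace X] where
  cell : ℕ → Type v
  attach : ∀ n, cell n → C(Disk n, X)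
  isEmbedding_interior : ∀ n (i : cell n),
    Topology.IsEmbedding
      fun y : {y : Disk n // ‖(y : EuclideanSpace ℝ (Fin n))‖ < 1} => attach n i y.1
  pairwiseDisjoint : ∀ n (i : cell n), ∀ m (j : cell m),
    (⟨n, i⟩ : Σ k, cell k) ≠ ⟨m, j⟩ →
      Disjoint (attach n i '' {y : Disk n | ‖(y : EuclideanSpace ℝ (Fin n))‖ < 1})
        (attach m j '' {y : Disk m | ‖(y : EuclideanSpace ℝ (Fin m))‖ < 1})
  covers : ∀ x : X, ∃ n, ∃ i : cell n, ∃ y : Disk n,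
    ‖(y : EuclideanSpace ℝ (Fin n))‖ < 1 ∧ attach n i y = x
  closureFiniteness : ∀ n (i : cell n), ∃ S : Finset (Σ k, cell k),
    (∀ j ∈ S, j.1 < n) ∧
      attach n i '' {y : Disk n | ‖(y : EuclideanSpace ℝ (Fin n))‖ = 1} ⊆
        ⋃ j ∈ S, attach j.1 j.2 '' {y : Disk j.1 | ‖(y : EuclideanSpace ℝ (Fin j.1))‖ < 1}
  weakTopology : ∀ A : Set X, (∀ n (i : cell n), IsClosed (attach n i ⁻¹' A)) → IsClosed A

/-- `K` is homotopy dominated by some finite CW complex. -/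
def DominatedByFiniteCW (K : Type u) [TopologicalSpace K] : Prop :=
  ∃ (F : Type) (_ : TopologicalSpace F) (_ : T2Space F) (cF : CWStructure.{0, 0} F),
    Finite (Σ n, cF.cell n) ∧ HomotopyDominatedBy K F

/-- `K` is a wedge `L ∨ S`: `K` is the union of two closed subspaces, one homeomorphic
to `L`, the other to `S`, meeting in exactly one point. -/
def IsWedgeOf (K : Type u) [TopologicalSpace K] (L : Type v) [TopologicalSpace L]
    (S : Type w) [TopologicalSpace S] : Prop :=
  ∃ L' S' : Set K, IsClosed L' ∧ IsClosed S' ∧ L' ∪ S' = Set.univ ∧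
    (∃ p : K, L' ∩ S' = {p}) ∧ Nonempty (L' ≃ₜ L) ∧ Nonempty (S' ≃ₜ S)

/-- The Hilbert cube `Q = [0,1]^ℕ`. -/
abbrev HilbertCube : Type := ℕ → unitInterval

/-- A continuous map `f : Y → Z` is `L`-invertible if every continuous map `g : Z' → Z`
from a compact metrizable space `Z'` with `L ∈ AE(Z')` lifts through `f`. -/
def IsInvertibleFor (L : Type u) [TopologicalSpace L] {Y : Type v} {Z : Type w}
    [TopologicalSpace Y] [TopologicalSpace Z] (f : C(Y, Z)) : Prop :=
  ∀ (Z' : Type) [TopologicalSpace Z'] [CompactSpace Z'] [MetrizableSpace Z'],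
    IsAE L Z' → ∀ g : C(Z', Z), ∃ h : C(Z', Y), ∀ z, f (h z) = g z

/-- A cozero (functionally open) subset of `B`. -/
def IsCozero {B : Type u} [TopologicalSpace B] (G : Set B) : Prop :=
  ∃ f : C(B, ℝ), G = f ⁻¹' {0}ᶜ

/-- A topological space is completely metrizable if its topology is induced by a
complete metric. -/
def IsCompletelyMetrizable (X : Type u) [t : TopologicalSpace X] : Prop :=
  ∃ m : MetricSpace X, m.toUniformSpace.toTopologicalSpace = t ∧
    @CompleteSpace X m.toUniformSpace

/-! ### Absolute extensors: retracts, wedges and spheres -/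

/-- Tietze extension with a norm bound, for functions defined on the whole space and continuous
on a closed subset. -/
lemma tietze_bound {X : Type*} [TopologicalSpace X] [NormalSpace X] {E : Type*}
    [NormedAddCommGroup E] [NormedSpace ℝ E] [FiniteDimensional ℝ E] {A : Set X}
    (hA : IsClosed A) (f : X → E) (hf : ContinuousOn f A) {R : ℝ} (hR : 0 < R)
    (hb : ∀ a ∈ A, ‖f a‖ ≤ R) :
    ∃ F : X → E, Continuous F ∧ (∀ a ∈ A, F a = f a) ∧ ∀ x, ‖F x‖ ≤ R := by
  have := Metric.instTietzeExtensionClosedBall.{_, 0} ℝ (0 : E) hR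
  obtain ⟨g, hg, hgf⟩ := ContinuousMap.exists_forall_mem_restrict_eq hA
    (⟨A.domRestrict f, hf.domRestrict⟩ : C(A, E)) (t := Metric.closedBall 0 R)
    (fun a => mem_closedBall_zero_iff.2 (hb a a.2))
  refine ⟨g, g.continuous, fun a ha => ?_, fun x => by simpa using hg x⟩
  exact congrArg (fun h : C(A, E) => h ⟨a, ha⟩) hgf

lemma tietze_on {X : Type*} [TopologicalSpace X] [NormalSpace X] {E : Type*}
    [NormedAddCommGroup E] [NormedSpace ℝ E] [FiniteDimensional ℝ E] {A : Set X}
    (hA : IsClosed A) (f : X → E) (hf : ContinuousOn f A) :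
    ∃ F : X → E, Continuous F ∧ ∀ a ∈ A, F a = f a := by
  obtain ⟨g, hgf⟩ := ContinuousMap.exists_restrict_eq hA
    (⟨A.domRestrict f, hf.domRestrict⟩ : C(A, E))
  exact ⟨g, g.continuous, fun a ha => congrArg (fun h : C(A, E) => h ⟨a, ha⟩) hgf⟩

lemma IsAE.extend_on {K : Type*} [TopologicalSpace K] {X : Type*} [TopologicalSpace X]
    (h : IsAE K X) {A : Set X} (hA : IsClosed A) (f : X → K) (hf : ContinuousOn f A) :
    ∃ F : X → K, Continuous F ∧ ∀ a ∈ A, F a = f a := by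
  obtain ⟨F, hF⟩ := h A hA ⟨A.domRestrict f, hf.domRestrict⟩
  exact ⟨F, F.continuous, fun a ha => hF ⟨a, ha⟩⟩

lemma IsAE.extend_into {K : Type*} [TopologicalSpace K] {X : Type*} [TopologicalSpace X]
    {R : Set K} (h : IsAE R X) {B : Set X} (hB : IsClosed B) (g : X → K)
    (hg : ContinuousOn g B) (hgR : ∀ b ∈ B, g b ∈ R) :
    ∃ G : X → K, Continuous G ∧ (∀ x, G x ∈ R) ∧ ∀ b ∈ B, G b = g b := by
  obtain ⟨G, hG⟩ := h B hB ⟨fun b => ⟨g b, hgR b b.2⟩,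
    (continuousOn_iff_continuous_domRestrict.1 hg).subtype_mk fun b => hgR b b.2⟩
  exact ⟨fun x => G x, by fun_prop, fun x => (G x).2,
    fun b hb => congrArg Subtype.val (hG ⟨b, hb⟩)⟩

lemma isAE_of_extend_on {K : Type*} [TopologicalSpace K] [Nonempty K] {X : Type*}
    [TopologicalSpace X]
    (h : ∀ A : Set X, IsClosed A → ∀ f : X → K, ContinuousOn f A →
      ∃ F : X → K, Continuous F ∧ ∀ a ∈ A, F a = f a) : IsAE K X := by
  classical
  intro A hA f
  let g : X → K := fun x => if hx : x ∈ A then f ⟨x, hx⟩ else Classical.arbitrary K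
  have hg : A.domRestrict g = f := by
    ext a
    simp [g, Set.domRestrict]
  obtain ⟨F, hF, hFg⟩ := h A hA g (by
    rw [continuousOn_iff_continuous_domRestrict, hg]
    exact f.continuous)
  refine ⟨⟨F, hF⟩, fun a => ?_⟩
  have := hFg a a.2
  simpa [g] using this

lemma IsAE.of_retract {K S X : Type*} [TopologicalSpace K] [TopologicalSpace S]
    [TopologicalSpace X] (h : IsAE K X) (i : C(S, K)) (r : C(K, S)) (hr : ∀ s, r (i s) = s) :
    IsAE S X := by
  intro A hA f
  obtain ⟨F, hF⟩ := h A hA (i.comp f)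
  exact ⟨r.comp F, fun a => by simp [hF, hr]⟩

lemma IsAE.of_target_homeomorph {K S X : Type*} [TopologicalSpace K] [TopologicalSpace S]
    [TopologicalSpace X] (h : IsAE K X) (e : S ≃ₜ K) : IsAE S X :=
  h.of_retract ⟨e, e.continuous⟩ ⟨e.symm, e.symm.continuous⟩ e.symm_apply_apply

lemma IsAE.of_homeomorph {K X X' : Type*} [TopologicalSpace K] [TopologicalSpace X]
    [TopologicalSpace X'] (h : IsAE K X) (e : X ≃ₜ X') : IsAE K X' := by
  intro A hA f
  obtain ⟨F, hF⟩ := h (e ⁻¹' A) (hA.preimage e.continuous)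
    (f.comp ⟨fun x => ⟨e x.1, x.2⟩, by fun_prop⟩)
  refine ⟨F.comp ⟨e.symm, e.symm.continuous⟩, fun a => ?_⟩
  have := hF ⟨e.symm a, by simp⟩
  simpa using this

/-- Each half of a wedge is a retract of the wedge: collapse the other half to the wedge point. -/
lemma exists_wedge_retraction {K : Type*} [TopologicalSpace K] {P Q : Set K} (hP : IsClosed P)
    (hQ : IsClosed Q) (hPQ : P ∪ Q = Set.univ) {p : K} (hp : P ∩ Q = {p}) :
    ∃ r : C(K, P), ∀ x : P, r x = x := by
  classical
  have hpP : p ∈ P := (hp.symm.subset rfl).1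
  let r : K → K := fun x => if x ∈ P then x else p
  have hrP : ∀ x, r x ∈ P := fun x => by
    by_cases hx : x ∈ P <;> simp [r, hx, hpP]
  have hr : Continuous r := by
    rw [← continuousOn_univ, ← hPQ]
    refine ContinuousOn.union_of_isClosed ?_ ?_ hP hQ
    · exact continuousOn_id.congr fun x hx => by simp [r, hx]
    · refine (continuousOn_const (c := p)).congr fun x hx => ?_
      by_cases hxP : x ∈ P
      · have : x ∈ ({p} : Set K) := hp ▸ ⟨hxP, hx⟩
        simp [r, Set.mem_singleton_iff.mp this]
      · simp [r, hxP]
  exact ⟨⟨fun x => ⟨r x, hrP x⟩, hr.subtype_mk _⟩, fun x => Subtype.ext (by simp [r])⟩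

lemma isAE_of_wedge {K : Type*} [TopologicalSpace K] {P Q : Set K} (hP : IsClosed P)
    (hQ : IsClosed Q) (hPQ : P ∪ Q = Set.univ) {p : K} (hp : P ∩ Q = {p})
    {X : Type*} [TopologicalSpace X] [MetrizableSpace X] (hXP : IsAE P X) (hXQ : IsAE Q X) :
    IsAE K X := by
  classical
  let := TopologicalSpace.metrizableSpaceMetric X
  have hpP : p ∈ P := (hp.symm.subset rfl).1
  have hpQ : p ∈ Q := (hp.symm.subset rfl).2
  have : Nonempty K := ⟨p⟩
  refine isAE_of_extend_on fun A hA f hf => ?_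
  set AP : Set X := A ∩ f ⁻¹' P with hAP
  set AQ : Set X := A ∩ f ⁻¹' Q with hAQ
  have hAPc : IsClosed AP := hf.preimage_isClosed_of_isClosed hA hP
  have hAQc : IsClosed AQ := hf.preimage_isClosed_of_isClosed hA hQ
  have hAcov : ∀ a ∈ A, a ∈ AP ∨ a ∈ AQ := fun a ha => by
    have : f a ∈ P ∪ Q := hPQ ▸ Set.mem_univ _
    exact this.imp (fun h => ⟨ha, h⟩) (fun h => ⟨ha, h⟩)
  rcases AP.eq_empty_or_nonempty with hPe | hPn
  · obtain ⟨G, hG, -, hGf⟩ := hXQ.extend_into hA f hf fun a ha =>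
      ((hAcov a ha).resolve_left (by simp [hPe])).2
    exact ⟨G, hG, hGf⟩
  rcases AQ.eq_empty_or_nonempty with hQe | hQn
  · obtain ⟨G, hG, -, hGf⟩ := hXP.extend_into hA f hf fun a ha =>
      ((hAcov a ha).resolve_right (by simp [hQe])).2
    exact ⟨G, hG, hGf⟩
  -- `X` is cut along the set `Y0` of points equidistant from `AP` and `AQ`; it goes to `p`.
  set Y0 : Set X := {x | infDist x AP = infDist x AQ} with hY0
  have hY0c : IsClosed Y0 := isClosed_eq (continuous_infDist_pt _) (continuous_infDist_pt _)
  have hP0 : ∀ a ∈ AP, infDist a AP = 0 := fun a ha => infDist_zero_of_mem ha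
  have hQ0 : ∀ a ∈ AQ, infDist a AQ = 0 := fun a ha => infDist_zero_of_mem ha
  have hA0 : ∀ a ∈ A, a ∈ Y0 → f a = p := by
    intro a ha ha0
    have : a ∈ AP ∧ a ∈ AQ := by
      rcases hAcov a ha with h | h
      · refine ⟨h, (hAQc.mem_iff_infDist_zero hQn).2 ?_⟩
        rw [← ha0, hP0 a h]
      · refine ⟨(hAPc.mem_iff_infDist_zero hPn).2 ?_, h⟩
        rw [ha0, hQ0 a h]
    have h2 : f a ∈ P ∩ Q := ⟨this.1.2, this.2.2⟩
    rw [hp] at h2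
    exact h2
  let g : X → K := fun x => if x ∈ Y0 then p else f x
  have hgA : ∀ a ∈ A, g a = f a := fun a ha => by
    by_cases h : a ∈ Y0
    · simp only [g, h, if_true]
      exact (hA0 a ha h).symm
    · simp [g, h]
  have hg : ContinuousOn g (A ∪ Y0) := by
    refine ContinuousOn.union_of_isClosed (hf.congr hgA) ?_ hA hY0c
    exact (continuousOn_const (c := p)).congr fun x hx => by simp [g, hx]
  obtain ⟨GP, hGP, -, hGPg⟩ := hXP.extend_into (hAPc.union hY0c) g
    (hg.mono (Set.union_subset_union_left _ Set.inter_subset_left)) (by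
      rintro b (hb | hb)
      · rw [hgA b hb.1]
        exact hb.2
      · simp only [g, hb, if_true]
        exact hpP)
  obtain ⟨GQ, hGQ, -, hGQg⟩ := hXQ.extend_into (hAQc.union hY0c) g
    (hg.mono (Set.union_subset_union_left _ Set.inter_subset_left)) (by
      rintro b (hb | hb)
      · rw [hgA b hb.1]
        exact hb.2
      · simp only [g, hb, if_true]
        exact hpQ)
  refine ⟨fun x => if infDist x AP ≤ infDist x AQ then GP x else GQ x, ?_, fun a ha => ?_⟩
  · refine Continuous.if_le hGP hGQ (continuous_infDist_pt _) (continuous_infDist_pt _) ?_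
    intro x hx
    have hx0 : x ∈ Y0 := hx
    rw [hGPg x (Or.inr hx0), hGQg x (Or.inr hx0)]
  · simp only
    split_ifs with h
    · have : a ∈ AP := by
        rcases hAcov a ha with h' | h'
        · exact h'
        · rw [hQ0 a h'] at h
          exact (hAPc.mem_iff_infDist_zero hPn).2 (le_antisymm h infDist_nonneg)
      rw [hGPg a (Or.inl this), hgA a ha]
    · have : a ∈ AQ := by
        rcases hAcov a ha with h' | h'
        · rw [hP0 a h'] at h
          exact absurd infDist_nonneg h
        · exact h'
      rw [hGQg a (Or.inl this), hgA a ha]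

/-- Suspension step: the equator `Sᵐ` is extended over the zero set of the last coordinate, and
the two hemispheres are balls, so Tietze's theorem finishes the extension. -/
lemma isAE_sphere_succ {X : Type*} [TopologicalSpace X] [NormalSpace X] {m : ℕ}
    (h : IsAE (Sphere m) X) : IsAE (Sphere (m + 1)) X := by
  classical
  have : Nonempty (Sphere (m + 1)) :=
    (NormedSpace.sphere_nonempty.mpr zero_le_one).to_subtype
  refine isAE_of_extend_on fun A hA f hf => ?_
  let last : EuclideanSpace ℝ (Fin (m + 2)) → ℝ := fun x => x (Fin.last _)
  let tail : EuclideanSpace ℝ (Fin (m + 2)) → EuclideanSpace ℝ (Fin (m + 1)) :=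
    fun x => WithLp.toLp 2 fun i => x (Fin.castSucc i)
  let join : EuclideanSpace ℝ (Fin (m + 1)) → ℝ → EuclideanSpace ℝ (Fin (m + 2)) :=
    fun y t => WithLp.toLp 2 (Fin.snoc (α := fun _ => ℝ) (fun i => y i) t)
  have hlast : Continuous last := by fun_prop
  have htail : Continuous tail := by fun_prop
  have hnorm : ∀ x, ‖x‖ ^ 2 = ‖tail x‖ ^ 2 + last x ^ 2 := by
    intro x
    simp [EuclideanSpace.norm_sq_eq, Fin.sum_univ_castSucc, tail, last]
  have hjoin : ∀ x, join (tail x) (last x) = x := by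
    intro x
    ext i
    refine Fin.lastCases ?_ (fun j => ?_) i <;> simp [join, tail, last]
  have hjt : ∀ y t, tail (join y t) = y := fun y t => by
    ext i
    simp [join, tail]
  have hjl : ∀ y t, last (join y t) = t := fun y t => by simp [join, last]
  have hjoinc : Continuous fun q : EuclideanSpace ℝ (Fin (m + 1)) × ℝ => join q.1 q.2 := by
    refine (PiLp.continuous_toLp 2 _).comp (continuous_pi fun i => ?_)
    refine Fin.lastCases ?_ (fun j => ?_) i
    · simpa using continuous_snd
    · simp only [Fin.snoc_castSucc]
      fun_prop
  have hS : ∀ x : Sphere (m + 1), ‖tail x‖ ^ 2 + last x ^ 2 = 1 := fun x => by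
    rw [← hnorm, norm_eq_of_mem_sphere x, one_pow]
  have hfv : ContinuousOn (fun x => (f x : EuclideanSpace ℝ (Fin (m + 2)))) A :=
    continuous_subtype_val.comp_continuousOn hf
  obtain ⟨σ, hσ, hσf⟩ := tietze_on hA (fun x => last (f x)) (hlast.comp_continuousOn hfv)
  set X0 : Set X := {x | σ x = 0} with hX0
  have hX0c : IsClosed X0 := isClosed_eq hσ continuous_const
  have htail1 : ∀ a ∈ A, a ∈ X0 → ‖tail (f a)‖ = 1 := by
    intro a ha ha0
    have h1 := hS (f a)
    have h2 : last (f a) = 0 := by rw [← hσf a ha]; exact ha0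
    rw [h2] at h1
    have h3 : ‖tail (f a)‖ ^ 2 = 1 := by simpa using h1
    exact (pow_eq_one_iff_of_nonneg (norm_nonneg _) two_ne_zero).1 h3
  obtain ⟨g, hgc, hgS, hg⟩ := h.extend_into (hA.inter hX0c) (fun a => tail (f a))
    ((htail.comp_continuousOn hfv).mono Set.inter_subset_left)
    (fun a ha => by simpa using htail1 a ha.1 ha.2)
  let T0 : X → EuclideanSpace ℝ (Fin (m + 1)) := fun x => if x ∈ X0 then g x else tail (f x)
  have hT0A : ∀ a ∈ A, T0 a = tail (f a) := fun a ha => by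
    by_cases ha0 : a ∈ X0
    · simp only [T0, ha0, if_true]
      exact hg a ⟨ha, ha0⟩
    · simp [T0, ha0]
  have hT0 : ContinuousOn T0 (A ∪ X0) := by
    refine ContinuousOn.union_of_isClosed ((htail.comp_continuousOn hfv).congr hT0A) ?_ hA hX0c
    exact hgc.continuousOn.congr fun x hx => by simp [T0, hx]
  obtain ⟨T, hT, hTT0, hT1⟩ := tietze_bound (hA.union hX0c) T0 hT0 one_pos (by
    rintro a (ha | ha)
    · rw [hT0A a ha]
      have := hS (f a)
      nlinarith [sq_nonneg (last (f a)), norm_nonneg (tail (f a))]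
    · simp only [T0, ha, if_true]
      exact (mem_sphere_zero_iff_norm.1 (hgS a)).le)
  let s : X → ℝ := fun x => if 0 ≤ σ x then √(1 - ‖T x‖ ^ 2) else -√(1 - ‖T x‖ ^ 2)
  have hs : Continuous s := by
    refine Continuous.if_le (by fun_prop) (by fun_prop) continuous_const hσ fun x hx => ?_
    have hx0 : x ∈ X0 := hx.symm
    rw [hTT0 x (Or.inr hx0)]
    simp [T0, hx0, mem_sphere_zero_iff_norm.1 (hgS x)]
  have hs2 : ∀ x, s x ^ 2 = 1 - ‖T x‖ ^ 2 := fun x => by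
    have h0 : 0 ≤ 1 - ‖T x‖ ^ 2 := by nlinarith [hT1 x, norm_nonneg (T x)]
    by_cases hx : 0 ≤ σ x <;> simp [s, hx, Real.sq_sqrt h0]
  refine ⟨fun x => ⟨join (T x) (s x), ?_⟩, ?_, fun a ha => ?_⟩
  · have h1 := hnorm (join (T x) (s x))
    rw [hjt, hjl, hs2] at h1
    have h3 : ‖join (T x) (s x)‖ ^ 2 = 1 := by linarith
    simpa using (pow_eq_one_iff_of_nonneg (norm_nonneg _) two_ne_zero).1 h3
  · exact (hjoinc.comp (hT.prodMk hs)).subtype_mk _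
  · refine Subtype.ext ?_
    have hTa : T a = tail (f a) := by rw [hTT0 a (Or.inl ha), hT0A a ha]
    have hsa : s a = last (f a) := by
      have h1 : 1 - ‖T a‖ ^ 2 = last (f a) ^ 2 := by
        have := hS (f a)
        rw [hTa]
        linarith
      simp only [s, h1, hσf a ha, Real.sqrt_sq_eq_abs]
      split_ifs with h2
      · exact abs_of_nonneg h2
      · rw [abs_of_neg (not_le.1 h2), neg_neg]
    simp only [hTa, hsa, hjoin]

lemma isAE_sphere_of_le {X : Type*} [TopologicalSpace X] [NormalSpace X] {m k : ℕ}
    (h : IsAE (Sphere m) X) (hk : m ≤ k) : IsAE (Sphere k) X := by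
  induction k, hk using Nat.le_induction with
  | base => exact h
  | succ k _ ih => exact isAE_sphere_succ ih


/-! ### Attaching one cell inside a Hausdorff space -/

/-- The subset `C` of `L` arises from the compact set `C'` by attaching one `n`-cell with
characteristic map `χ`.  For convenience `χ` is defined on all of `ℝⁿ` and sends everything
outside the open unit ball into `C'`. -/
structure CellAttach {L : Type*} [TopologicalSpace L] {n : ℕ} (C' C : Set L)
    (χ : EuclideanSpace ℝ (Fin n) → L) : Prop where
  cont : Continuous χ
  compact : IsCompact C'
  boundary : ∀ y, 1 ≤ ‖y‖ → χ y ∈ C'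
  interior : ∀ y, ‖y‖ < 1 → χ y ∉ C'
  inj : ∀ y z, ‖y‖ < 1 → ‖z‖ < 1 → χ y = χ z → y = z
  eq : C = C' ∪ χ '' ball 0 1

namespace CellAttach

variable {L : Type*} [TopologicalSpace L] {n : ℕ} {C' C : Set L}
  {χ : EuclideanSpace ℝ (Fin n) → L}

lemma subset (h : CellAttach C' C χ) : C' ⊆ C := h.eq ▸ Set.subset_union_left

lemma mem (h : CellAttach C' C χ) (y : EuclideanSpace ℝ (Fin n)) : χ y ∈ C := by
  rcases lt_or_ge ‖y‖ 1 with hy | hy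
  · rw [h.eq]; exact Or.inr ⟨y, by simpa using hy, rfl⟩
  · exact h.subset (h.boundary y hy)

lemma cases (h : CellAttach C' C χ) {c : L} (hc : c ∈ C) : c ∈ C' ∨ ∃ y, ‖y‖ < 1 ∧ χ y = c := by
  rw [h.eq] at hc
  rcases hc with hc | ⟨y, hy, rfl⟩
  · exact Or.inl hc
  · exact Or.inr ⟨y, by simpa using hy, rfl⟩

lemma compact' (h : CellAttach C' C χ) : IsCompact C := by
  have : C = C' ∪ χ '' closedBall 0 1 := by
    apply subset_antisymm
    · rw [h.eq]; gcongr; exact ball_subset_closedBall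
    · rintro _ (hc | ⟨y, -, rfl⟩)
      · exact h.subset hc
      · exact h.mem y
  rw [this]
  exact h.compact.union ((isCompact_closedBall _ _).image h.cont)

/-- A map on `C` may be prescribed on `C'` and on the cell, as long as the two prescriptions
agree on the boundary of the cell. -/
lemma glue [T2Space L] (h : CellAttach C' C χ) {W : Type*} [TopologicalSpace W] (a : L → W)
    (b : EuclideanSpace ℝ (Fin n) → W) (ha : ContinuousOn a C')
    (hb : ContinuousOn b (closedBall 0 1)) (hab : ∀ y, ‖y‖ = 1 → b y = a (χ y)) :
    ∃ f : L → W, ContinuousOn f C ∧ (∀ c ∈ C', f c = a c) ∧ ∀ y, ‖y‖ ≤ 1 → f (χ y) = b y := by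
  classical
  let f : L → W := fun c => if c ∈ C' then a c else b (Function.invFunOn χ (ball 0 1) c)
  have h1 : ∀ c ∈ C', f c = a c := fun c hc => if_pos hc
  have h2 : ∀ y, ‖y‖ ≤ 1 → f (χ y) = b y := by
    intro y hy
    rcases hy.lt_or_eq with hy | hy
    · have hm : χ y ∈ χ '' ball 0 1 := ⟨y, by simpa using hy, rfl⟩
      simp only [f, if_neg (h.interior y hy)]
      congr 1
      refine h.inj _ _ ?_ hy (Function.invFunOn_eq hm)
      simpa using Function.invFunOn_mem hm
    · rw [h1 _ (h.boundary y hy.ge), hab y hy]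
  refine ⟨f, ?_, h1, h2⟩
  rw [continuousOn_iff_isClosed]
  intro T hT
  refine ⟨(C' ∩ a ⁻¹' T) ∪ χ '' (closedBall 0 1 ∩ b ⁻¹' T), ?_, ?_⟩
  · refine (ha.preimage_isClosed_of_isClosed h.compact.isClosed hT).union ?_
    refine (IsCompact.image ?_ h.cont).isClosed
    exact (isCompact_closedBall _ _).of_isClosed_subset
      (hb.preimage_isClosed_of_isClosed isClosed_closedBall hT) Set.inter_subset_left
  · ext c
    constructor
    · rintro ⟨hc, hcC⟩
      refine ⟨?_, hcC⟩
      rcases h.cases hcC with hc' | ⟨y, hy, rfl⟩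
      · left; exact ⟨hc', by simpa [h1 c hc'] using hc⟩
      · right; exact ⟨y, ⟨by simpa using hy.le, by simpa [h2 y hy.le] using hc⟩, rfl⟩
    · rintro ⟨⟨hc', hc⟩ | ⟨y, ⟨hy, hc⟩, rfl⟩, hcC⟩
      · exact ⟨by simpa [h1 c hc'] using hc, hcC⟩
      · exact ⟨by simpa [h2 y (by simpa using hy)] using hc, hcC⟩

end CellAttach

/-! ### Neighbourhood retracts and cell attachment -/

/-- The set `C` embeds into a finite dimensional normed space as a neighbourhood retract:
`ι` is the embedding and `r` the retraction of the open set `U` (viewed as a map into `C`). -/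
def IsNR {L : Type*} [TopologicalSpace L] (C : Set L) : Prop :=
  ∃ (E : Type) (_ : NormedAddCommGroup E) (_ : NormedSpace ℝ E) (_ : FiniteDimensional ℝ E)
    (ι : L → E) (U : Set E) (r : E → L),
    ContinuousOn ι C ∧ IsOpen U ∧ (∀ c ∈ C, ι c ∈ U) ∧ ContinuousOn r U ∧ (∀ x ∈ U, r x ∈ C) ∧
      ∀ c ∈ C, r (ι c) = c

namespace CellNR

lemma eventually_pos {E G : Type*} [TopologicalSpace E] [TopologicalSpace G] {x : E × G × ℝ}
    (hx : 0 < x.2.2) : ∀ᶠ z : E × G × ℝ in 𝓝 x, 0 < z.2.2 :=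
  ContinuousAt.eventually_lt (f := fun _ => (0 : ℝ)) (by fun_prop) (by fun_prop) hx

variable {E G : Type*} [NormedAddCommGroup E] [NormedAddCommGroup G] [NormedSpace ℝ G]
  (b : G → E)

/-- The point of the cell suggested by `(v, w, t)`, where cell points are embedded as
`(b y, (1 - ‖y‖) • y, 1 - ‖y‖)`. -/
noncomputable def pt (x : E × G × ℝ) : G := x.2.2⁻¹ • x.2.1

/-- The defect of `(v, w, t)` from being the image of a cell point, relative to `t`. -/
noncomputable def lam (x : E × G × ℝ) : ℝ :=
  (‖x.1 - b (pt x)‖ + |‖pt x‖ - (1 - x.2.2)|) / x.2.2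

/-- The cell point, pushed towards the boundary of the cell as the defect grows to `1`. -/
noncomputable def pt' (x : E × G × ℝ) : G := (max ‖pt x‖ (1 - lam b x))⁻¹ • pt x

variable {b}

lemma pt_continuousAt {x : E × G × ℝ} (hx : 0 < x.2.2) : ContinuousAt (pt (E := E) (G := G)) x := by
  unfold pt
  have : x.2.2 ≠ 0 := hx.ne'
  fun_prop (disch := assumption)

lemma lam_continuousAt (hb : Continuous b) {x : E × G × ℝ} (hx : 0 < x.2.2) :
    ContinuousAt (lam b) x := by
  have h1 := pt_continuousAt hx
  have h2 : ContinuousAt (fun x : E × G × ℝ => b (pt x)) x := hb.continuousAt.comp h1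
  have : x.2.2 ≠ 0 := hx.ne'
  unfold lam
  fun_prop (disch := assumption)

lemma pt'_continuousAt (hb : Continuous b) {x : E × G × ℝ} (hx : 0 < x.2.2)
    (h : pt x ≠ 0 ∨ lam b x < 1) : ContinuousAt (pt' b) x := by
  have h1 := pt_continuousAt hx
  have h2 := lam_continuousAt hb hx
  have : max ‖pt x‖ (1 - lam b x) ≠ 0 := by
    apply ne_of_gt
    rcases h with h | h
    · exact lt_max_of_lt_left (norm_pos_iff.2 h)
    · exact lt_max_of_lt_right (by linarith)
  unfold pt'
  fun_prop (disch := assumption)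

lemma lam_mul {x : E × G × ℝ} (hx : 0 < x.2.2) :
    lam b x * x.2.2 = ‖x.1 - b (pt x)‖ + |‖pt x‖ - (1 - x.2.2)| := by
  unfold lam
  field_simp

lemma lam_nonneg {x : E × G × ℝ} (hx : 0 < x.2.2) : 0 ≤ lam b x := by
  unfold lam; positivity

/-- Near a point with `t = 0`, the points of small defect have cell coordinates that converge,
along a given ultrafilter, to a boundary point. -/
lemma exists_limit [FiniteDimensional ℝ G] (hb : Continuous b) {x : E × G × ℝ} (hx : x.2.2 = 0)
    (l : Ultrafilter (E × G × ℝ)) (hl : (l : Filter _) ≤ 𝓝 x)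
    (h : ∀ᶠ z in (l : Filter _), 0 < z.2.2 ∧ lam b z ≤ 2) :
    ∃ y : G, ‖y‖ = 1 ∧ b y = x.1 ∧ Filter.Tendsto (pt' b) l (𝓝 y) := by
  have ht : Filter.Tendsto (fun z : E × G × ℝ => z.2.2) l (𝓝 0) := by
    rw [← hx]; exact (Continuous.tendsto (by fun_prop) x).mono_left hl
  have hv : Filter.Tendsto (fun z : E × G × ℝ => z.1) l (𝓝 x.1) :=
    (Continuous.tendsto (by fun_prop) x).mono_left hl
  have hd : Filter.Tendsto (fun z : E × G × ℝ => lam b z * z.2.2) l (𝓝 0) := by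
    refine tendsto_of_tendsto_of_tendsto_of_le_of_le' tendsto_const_nhds
      (by simpa using ht.const_mul 2) ?_ ?_
    · filter_upwards [h] with z hz using mul_nonneg (lam_nonneg hz.1) hz.1.le
    · filter_upwards [h] with z hz using by gcongr; exacts [hz.1.le, hz.2]
  have hd1 : Filter.Tendsto (fun z : E × G × ℝ => z.1 - b (pt z)) l (𝓝 0) := by
    refine squeeze_zero_norm' ?_ hd
    filter_upwards [h] with z hz
    rw [lam_mul hz.1]
    linarith [abs_nonneg (‖pt z‖ - (1 - z.2.2))]
  have hd2 : Filter.Tendsto (fun z : E × G × ℝ => ‖pt z‖ - (1 - z.2.2)) l (𝓝 0) := by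
    refine squeeze_zero_norm' ?_ hd
    filter_upwards [h] with z hz
    rw [lam_mul hz.1, Real.norm_eq_abs]
    linarith [norm_nonneg (z.1 - b (pt z))]
  have hn : Filter.Tendsto (fun z : E × G × ℝ => ‖pt z‖) l (𝓝 1) := by
    have := hd2.add (ht.const_sub 1)
    simpa using this
  have hmem : ∀ᶠ z in (l : Filter (E × G × ℝ)), pt z ∈ closedBall (0 : G) 2 := by
    filter_upwards [hn.eventually_lt_const (show (1 : ℝ) < 2 by norm_num)] with z hz
    simpa using hz.le
  have : ProperSpace G := FiniteDimensional.proper_real G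
  obtain ⟨y, -, hy⟩ := (isCompact_closedBall (0 : G) 2).ultrafilter_le_nhds (l.map pt)
    (Filter.le_principal_iff.2 hmem)
  have hy : Filter.Tendsto (fun z : E × G × ℝ => pt z) l (𝓝 y) := hy
  have hy1 : ‖y‖ = 1 := tendsto_nhds_unique hy.norm hn
  refine ⟨y, hy1, ?_, ?_⟩
  · have := tendsto_nhds_unique hd1 (hv.sub ((hb.tendsto y).comp hy))
    exact (sub_eq_zero.1 this.symm).symm
  · have hmax : Filter.Tendsto (fun z : E × G × ℝ => max ‖pt z‖ (1 - lam b z)) l (𝓝 1) := by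
      have hm : Filter.Tendsto (fun z : E × G × ℝ => max ‖pt z‖ 1) l (𝓝 1) := by
        simpa using hn.max (tendsto_const_nhds (x := (1 : ℝ)))
      refine tendsto_of_tendsto_of_tendsto_of_le_of_le' hn hm ?_ ?_
      · exact Filter.Eventually.of_forall fun z => le_max_left _ _
      · filter_upwards [h] with z hz
        exact max_le_max le_rfl (by linarith [lam_nonneg (b := b) hz.1])
    have := (hmax.inv₀ one_ne_zero).smul hy
    rw [inv_one, one_smul] at this
    exact this

variable [NormedSpace ℝ E]

variable (b) in
open scoped Classical in
/-- A point of `E`, moving from the boundary value `b (pt' x)` to `v` while the defect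
grows from `1` to `2`. -/
noncomputable def pr (x : E × G × ℝ) : E :=
  if 0 < x.2.2 then x.1 + max 0 (min 1 (2 - lam b x)) • (b (pt' b x) - x.1) else x.1

variable (b) in
open scoped Classical in
/-- The retraction onto the space with the cell attached, given a retraction `r` for the
space without the cell. -/
noncomputable def ret {L : Type*} (χ : G → L) (r : E → L) (x : E × G × ℝ) : L :=
  if 0 < x.2.2 ∧ lam b x < 1 then χ (pt' b x) else r (pr b x)

lemma pr_eq_of_two_le {x : E × G × ℝ} (h : 2 ≤ lam b x) : pr b x = x.1 := by
  unfold pr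
  rw [max_eq_left ((min_le_right _ _).trans (by linarith))]
  simp

lemma pr_eq_of_nonpos {x : E × G × ℝ} (h : x.2.2 ≤ 0) : pr b x = x.1 := by
  simp [pr, h.not_gt]

/-- `pr` is continuous at the points `(v, w, 0)`, where its value is `v`. -/
lemma pr_tendsto [FiniteDimensional ℝ G] (hb : Continuous b) {x : E × G × ℝ} (hx : x.2.2 = 0) :
    Filter.Tendsto (pr b) (𝓝 x) (𝓝 x.1) := by
  rw [Filter.tendsto_iff_ultrafilter]
  intro l hl
  have hv : Filter.Tendsto (fun z : E × G × ℝ => z.1) l (𝓝 x.1) :=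
    (Continuous.tendsto (by fun_prop) x).mono_left hl
  by_cases h : ∀ᶠ z in (l : Filter _), 0 < z.2.2 ∧ lam b z ≤ 2
  · obtain ⟨y, -, hby, hy⟩ := exists_limit hb hx l hl h
    have h1 : Filter.Tendsto (fun z => b (pt' b z) - z.1) l (𝓝 0) := by
      have := ((hb.tendsto y).comp hy).sub hv
      simpa [hby] using this
    have h2 : Filter.Tendsto (fun z => pr b z - z.1) l (𝓝 0) := by
      refine squeeze_zero_norm' ?_ (by simpa using h1.norm)
      filter_upwards [h] with z hz
      have h0 : 0 ≤ max 0 (min 1 (2 - lam b z)) := le_max_left _ _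
      have h1 : max 0 (min 1 (2 - lam b z)) ≤ 1 := max_le zero_le_one (min_le_left _ _)
      rw [pr, if_pos hz.1, add_sub_cancel_left, norm_smul, Real.norm_of_nonneg h0]
      exact mul_le_of_le_one_left (norm_nonneg _) h1
    simpa using h2.add hv
  · refine hv.congr' ?_
    filter_upwards [Ultrafilter.eventually_not.2 h] with z hz
    by_cases hz0 : 0 < z.2.2
    · exact (pr_eq_of_two_le (not_le.1 fun h => hz ⟨hz0, h⟩).le).symm
    · exact (pr_eq_of_nonpos (not_lt.1 hz0)).symm

section

variable {L : Type*} [TopologicalSpace L] {χ : G → L} {r : E → L}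

lemma ret_continuousAt_of_lt (hb : Continuous b) (hχ : Continuous χ) {x : E × G × ℝ}
    (hx : 0 < x.2.2) (h : lam b x < 1) : ContinuousAt (ret b χ r) x := by
  have h1 : ContinuousAt (fun z => χ (pt' b z)) x :=
    hχ.continuousAt.comp (pt'_continuousAt hb hx (Or.inr h))
  refine h1.congr ?_
  filter_upwards [eventually_pos hx, (lam_continuousAt hb hx).eventually_lt_const h] with z h1 h2
  exact (if_pos ⟨h1, h2⟩).symm

/-- The retraction is continuous at all points with small `t` that `pr` maps into the domain
of the old retraction. -/
lemma ret_continuousAt [FiniteDimensional ℝ G] (hb : Continuous b) (hχ : Continuous χ)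
    {ι : L → E} {U : Set E} (hU : IsOpen U) (hr : ContinuousOn r U)
    (hbι : ∀ y, ‖y‖ = 1 → b y = ι (χ y)) (hrι : ∀ y, ‖y‖ = 1 → r (ι (χ y)) = χ y)
    {x : E × G × ℝ} (hx : x.2.2 < 1 / 4) (hP : pr b x ∈ U) : ContinuousAt (ret b χ r) x := by
  rcases lt_trichotomy x.2.2 0 with ht | ht | ht
  · rw [pr_eq_of_nonpos ht.le] at hP
    have h1 : ContinuousAt (fun z : E × G × ℝ => r z.1) x :=
      (hr.continuousAt (hU.mem_nhds hP)).comp continuousAt_fst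
    refine h1.congr ?_
    have : ∀ᶠ z : E × G × ℝ in 𝓝 x, z.2.2 < 0 :=
      ContinuousAt.eventually_lt (g := fun _ => (0 : ℝ)) (by fun_prop) (by fun_prop) ht
    filter_upwards [this] with z hz
    rw [ret, if_neg fun h => absurd h.1 hz.not_gt, pr_eq_of_nonpos hz.le]
  · have hPx : pr b x = x.1 := pr_eq_of_nonpos ht.le
    rw [hPx] at hP
    have hrc := hr.continuousAt (hU.mem_nhds hP)
    have hrx : ret b χ r x = r x.1 := by rw [ret, if_neg fun h => absurd h.1 ht.le.not_gt, hPx]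
    rw [ContinuousAt, hrx, Filter.tendsto_iff_ultrafilter]
    intro l hl
    by_cases h : ∀ᶠ z in (l : Filter _), 0 < z.2.2 ∧ lam b z < 1
    · obtain ⟨y, hy1, hby, hy⟩ := exists_limit hb ht l hl
        (h.mono fun z hz => ⟨hz.1, by linarith [hz.2]⟩)
      have : r x.1 = χ y := by rw [← hby, hbι y hy1, hrι y hy1]
      rw [this]
      refine ((hχ.tendsto y).comp hy).congr' ?_
      filter_upwards [h] with z hz using (if_pos hz).symm
    · have h1 : Filter.Tendsto (fun z => r (pr b z)) l (𝓝 (r x.1)) :=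
        hrc.tendsto.comp ((pr_tendsto hb ht).mono_left hl)
      refine h1.congr' ?_
      filter_upwards [Ultrafilter.eventually_not.2 h] with z hz using (if_neg hz).symm
  · rcases lt_or_ge (lam b x) 1 with hl | hl
    · exact ret_continuousAt_of_lt hb hχ ht hl
    have hlc := lam_continuousAt hb ht
    rcases lt_or_ge 2 (lam b x) with hl2 | hl2
    · rw [pr_eq_of_two_le hl2.le] at hP
      have h1 : ContinuousAt (fun z : E × G × ℝ => r z.1) x :=
        (hr.continuousAt (hU.mem_nhds hP)).comp continuousAt_fst
      refine h1.congr ?_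
      filter_upwards [hlc.eventually_const_lt hl2] with z hz
      rw [ret, if_neg fun h => absurd h.2 (by linarith), pr_eq_of_two_le hz.le]
    · have hy0 : pt x ≠ 0 := by
        intro h0
        have h1 := lam_mul (b := b) ht
        rw [h0] at h1
        have h2 : lam b x * x.2.2 ≤ 2 * x.2.2 := by gcongr
        have h3 := neg_abs_le (‖(0 : G)‖ - (1 - x.2.2))
        have h4 := norm_nonneg (x.1 - b 0)
        rw [norm_zero] at h3 h1
        linarith
      have hpt := pt'_continuousAt hb ht (Or.inl hy0)
      have hχc : ContinuousAt (fun z => χ (pt' b z)) x := hχ.continuousAt.comp hpt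
      have hprc : ContinuousAt (pr b) x := by
        have hbc : ContinuousAt (fun z => b (pt' b z)) x := hb.continuousAt.comp hpt
        have : ContinuousAt (fun z : E × G × ℝ =>
          z.1 + max 0 (min 1 (2 - lam b z)) • (b (pt' b z) - z.1)) x := by fun_prop
        refine this.congr ?_
        filter_upwards [eventually_pos ht] with z hz using (if_pos hz).symm
      have hrc : ContinuousAt (fun z => r (pr b z)) x :=
        ContinuousAt.comp (hr.continuousAt (hU.mem_nhds hP)) hprc
      rcases hl.lt_or_eq with hl | hl
      · refine hrc.congr ?_
        filter_upwards [hlc.eventually_const_lt hl] with z hz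
        exact (if_neg fun h => absurd h.2 hz.not_gt).symm
      · have hn : ‖pt' b x‖ = 1 := by
          have : 0 < ‖pt x‖ := norm_pos_iff.2 hy0
          rw [pt', ← hl, sub_self, max_eq_left this.le, norm_smul, norm_inv, norm_norm]
          field_simp
        have hpr : pr b x = b (pt' b x) := by
          rw [pr, if_pos ht, ← hl]
          norm_num
        have heq : r (pr b x) = χ (pt' b x) := by rw [hpr, hbι _ hn, hrι _ hn]
        have hx : ret b χ r x = χ (pt' b x) := by
          rw [ret, if_neg fun h => absurd h.2 hl.le.not_gt, heq]
        rw [ContinuousAt, hx]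
        refine Filter.Tendsto.if (hχc.mono_left inf_le_left) ?_
        rw [← heq]
        exact hrc.mono_left inf_le_left

end

end CellNR

open CellNR in
/-- Attaching a cell to a neighbourhood retract yields a neighbourhood retract. -/
lemma CellAttach.isNR {L : Type*} [TopologicalSpace L] [T2Space L] {n : ℕ} {C' C : Set L}
    {χ : EuclideanSpace ℝ (Fin n) → L} (h : CellAttach C' C χ) (hC' : IsNR C') : IsNR C := by
  obtain ⟨E, _, _, _, ι, U, r, hι, hU, hιU, hr, hrC, hrι⟩ := hC'
  obtain ⟨b, hb, hbι⟩ := tietze_on (A := sphere (0 : EuclideanSpace ℝ (Fin n)) 1)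
    isClosed_sphere (fun y => ι (χ y))
    (hι.comp h.cont.continuousOn fun y hy => h.boundary y (by simp at hy; exact hy.ge))
  have hbι : ∀ y, ‖y‖ = 1 → b y = ι (χ y) := fun y hy => hbι y (by simpa using hy)
  have hrχ : ∀ y, ‖y‖ = 1 → r (ι (χ y)) = χ y := fun y hy => hrι _ (h.boundary y hy.ge)
  obtain ⟨j, hj, hj1, hj2⟩ := h.glue
    (fun c => ((ι c, 0, 0) : E × EuclideanSpace ℝ (Fin n) × ℝ))
    (fun y => (b y, (1 - ‖y‖) • y, 1 - ‖y‖)) (by fun_prop) (by fun_prop)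
    (fun y hy => by simp [hy, hbι y hy])
  let q := ret b χ r
  refine ⟨E × EuclideanSpace ℝ (Fin n) × ℝ, inferInstance, inferInstance, inferInstance, j,
    {x | ∀ᶠ z in 𝓝 x, ContinuousAt q z ∧ q z ∈ C}, q, hj, isOpen_setOfPred_eventually_nhds, ?_,
    fun x hx => (Filter.Eventually.self_of_nhds hx).1.continuousWithinAt,
    fun x hx => (Filter.Eventually.self_of_nhds hx).2, ?_⟩
  · intro c hc
    rcases h.cases hc with hc | ⟨y, hy, rfl⟩
    · rw [Set.mem_ofPred_eq, hj1 c hc]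
      have hP : ∀ᶠ z in 𝓝 ((ι c, 0, 0) : E × EuclideanSpace ℝ (Fin n) × ℝ), pr b z ∈ U :=
        (pr_tendsto hb rfl).eventually (hU.mem_nhds (hιU c hc))
      have ht : ∀ᶠ z in 𝓝 ((ι c, 0, 0) : E × EuclideanSpace ℝ (Fin n) × ℝ), z.2.2 < 1 / 4 :=
        ContinuousAt.eventually_lt (g := fun _ => (1 / 4 : ℝ)) (by fun_prop) (by fun_prop)
          (by norm_num)
      filter_upwards [hP, ht] with z hz1 hz2
      refine ⟨ret_continuousAt hb h.cont hU hr hbι hrχ hz2 hz1, ?_⟩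
      simp only [q, ret]
      split_ifs
      · exact h.mem _
      · exact h.subset (hrC _ hz1)
    · rw [Set.mem_ofPred_eq, hj2 y hy.le]
      have ht : (0 : ℝ) < 1 - ‖y‖ := by linarith
      have hl : lam b (b y, (1 - ‖y‖) • y, 1 - ‖y‖) < 1 := by
        simp [lam, pt, smul_smul, inv_mul_cancel₀ ht.ne']
      filter_upwards [eventually_pos (x := (b y, (1 - ‖y‖) • y, 1 - ‖y‖)) ht,
        (lam_continuousAt hb (x := (b y, (1 - ‖y‖) • y, 1 - ‖y‖)) ht).eventually_lt_const hl]
        with z h1 h2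
      refine ⟨ret_continuousAt_of_lt hb h.cont h1 h2, ?_⟩
      simp only [q, ret, if_pos (And.intro h1 h2)]
      exact h.mem _
  · intro c hc
    rcases h.cases hc with hc | ⟨y, hy, rfl⟩
    · rw [hj1 c hc]
      simp [q, ret, pr, hrι c hc]
    · rw [hj2 y hy.le]
      have ht : (0 : ℝ) < 1 - ‖y‖ := by linarith
      have hp : pt ((b y, (1 - ‖y‖) • y, 1 - ‖y‖) : E × EuclideanSpace ℝ (Fin n) × ℝ) = y := by
        simp [pt, smul_smul, inv_mul_cancel₀ ht.ne']
      have hl : lam b (b y, (1 - ‖y‖) • y, 1 - ‖y‖) = 0 := by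
        simp [lam, hp]
      simp only [q, ret, hl, ht, zero_lt_one, and_self, if_true, pt', hp, sub_zero,
        max_eq_right hy.le, inv_one, one_smul]

lemma isNR_empty {L : Type*} [TopologicalSpace L] [Nonempty L] : IsNR (∅ : Set L) :=
  ⟨ℝ, inferInstance, inferInstance, inferInstance, fun _ => 0, ∅, fun _ => Classical.arbitrary L,
    by simp⟩

/-! ### Pushing maps off a cell -/

/-- If `S^m ∈ AE(X)`, a map of `X` can be pushed off an attached `(m + 1)`-cell without being
changed where it already misses the open cell: on the inner half of the cell it is replaced
by a map into the sphere which extends the radial projection. -/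
lemma CellAttach.push {L : Type*} [TopologicalSpace L] [T2Space L] {m : ℕ} {C' C : Set L}
    {χ : EuclideanSpace ℝ (Fin (m + 1)) → L} (h : CellAttach C' C χ) {X : Type*}
    [TopologicalSpace X] (hX : IsAE (Sphere m) X) {F : X → L} (hF : Continuous F)
    (hFC : ∀ x, F x ∈ C) :
    ∃ F' : X → L, Continuous F' ∧ (∀ x, F' x ∈ C') ∧ ∀ x, F x ∈ C' → F' x = F x := by
  classical
  obtain ⟨σ, hσ, hσ1, hσ2⟩ := h.glue (fun _ => (1 : ℝ)) (fun y => ‖y‖) (by fun_prop)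
    (by fun_prop) (fun y hy => hy)
  obtain ⟨ω, hω, -, hω2⟩ := h.glue (fun _ => (0 : EuclideanSpace ℝ (Fin (m + 1))))
    (fun y => (4 * (1 - ‖y‖)) • y) (by fun_prop) (by fun_prop) (fun y hy => by simp [hy])
  have hmax : ∀ y : EuclideanSpace ℝ (Fin (m + 1)), max ‖y‖ (1 / 2) ≠ 0 := fun y =>
    (lt_max_of_lt_right (by norm_num)).ne'
  obtain ⟨ρ, hρ, hρ1, hρ2⟩ := h.glue id (fun y => χ ((max ‖y‖ (1 / 2))⁻¹ • y))
    continuousOn_id (h.cont.comp (by fun_prop (disch := exact hmax _))).continuousOn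
    (fun y hy => by rw [hy, max_eq_left (by norm_num)]; simp)
  have hσF : Continuous fun x => σ (F x) := hσ.comp_continuous hF hFC
  have hhalf : ∀ x, σ (F x) = 1 / 2 → ∃ y, ‖y‖ = 1 / 2 ∧ χ y = F x := by
    intro x hx
    rcases h.cases (hFC x) with hc | ⟨y, hy, hyx⟩
    · rw [hσ1 _ hc] at hx; norm_num at hx
    · exact ⟨y, by rw [← hx, ← hyx, hσ2 y hy.le], hyx⟩
  obtain ⟨g, hg, hgs, hgω⟩ := IsAE.extend_into hX (B := {x | σ (F x) = 1 / 2})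
    (isClosed_eq hσF continuous_const) (fun x => ω (F x))
    (hω.comp_continuous hF hFC).continuousOn (by
      intro x hx
      obtain ⟨y, hy, hyx⟩ := hhalf x hx
      rw [← hyx, hω2 y (by linarith), hy]
      simp [norm_smul, hy]
      norm_num)
  refine ⟨fun x => if 1 / 2 ≤ σ (F x) then ρ (F x) else χ (g x), ?_, ?_, ?_⟩
  · refine Continuous.if_le (hρ.comp_continuous hF hFC) (h.cont.comp hg) continuous_const hσF ?_
    intro x hx
    obtain ⟨y, hy, hyx⟩ := hhalf x hx.symm
    simp only [hgω x hx.symm, ← hyx, hω2 y (show ‖y‖ ≤ 1 by linarith),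
      hρ2 y (show ‖y‖ ≤ 1 by linarith), hy]
    norm_num
  · intro x
    dsimp only
    split_ifs with hx
    · rcases h.cases (hFC x) with hc | ⟨y, hy, hyx⟩
      · rw [hρ1 _ hc]; exact hc
      · rw [← hyx, hσ2 y hy.le] at hx
        rw [← hyx, hρ2 y hy.le, max_eq_left hx]
        refine h.boundary _ ?_
        rw [norm_smul, norm_inv, norm_norm, inv_mul_cancel₀]
        linarith
    · refine h.boundary _ ?_
      have := hgs x
      rw [mem_sphere_zero_iff_norm] at this
      exact this.ge
  · intro x hx
    dsimp only
    rw [hσ1 _ hx, if_pos (by norm_num), hρ1 _ hx]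
    rfl

/-! ### Skeleta of a CW complex of finite type -/

namespace CWStructure

variable {L : Type u} [TopologicalSpace L] (cw : CWStructure.{u, v} L)

/-- An open cell. -/
def openCell (n : ℕ) (i : cw.cell n) : Set L :=
  cw.attach n i '' {y : Disk n | ‖(y : EuclideanSpace ℝ (Fin n))‖ < 1}

/-- The union of all open cells of dimension less than `n`. -/
def skel (n : ℕ) : Set L := ⋃ (k : ℕ) (_ : k < n) (i : cw.cell k), cw.openCell k i

lemma mem_skel {n : ℕ} {x : L} : x ∈ cw.skel n ↔ ∃ k < n, ∃ i, x ∈ cw.openCell k i := by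
  simp [skel]

lemma skel_mono {m n : ℕ} (h : m ≤ n) : cw.skel m ⊆ cw.skel n := by
  intro x hx
  rw [mem_skel] at hx ⊢
  obtain ⟨k, hk, hx⟩ := hx
  exact ⟨k, hk.trans_le h, hx⟩

lemma exists_mem_skel (x : L) : ∃ n, x ∈ cw.skel n := by
  obtain ⟨n, i, y, hy, hx⟩ := cw.covers x
  exact ⟨n + 1, cw.mem_skel.2 ⟨n, n.lt_succ_self, i, y, hy, hx⟩⟩

lemma boundary_mem_skel {n : ℕ} (i : cw.cell n) (y : Disk n)
    (hy : ‖(y : EuclideanSpace ℝ (Fin n))‖ = 1) : cw.attach n i y ∈ cw.skel n := by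
  obtain ⟨S, hS, hsub⟩ := cw.closureFiniteness n i
  have := hsub ⟨y, hy, rfl⟩
  simp only [Set.mem_iUnion] at this
  obtain ⟨j, hj, hjy⟩ := this
  exact cw.mem_skel.2 ⟨j.1, hS j hj, j.2, hjy⟩

lemma attach_mem_skel {n : ℕ} (i : cw.cell n) (y : Disk n) :
    cw.attach n i y ∈ cw.skel (n + 1) := by
  have hy : ‖(y : EuclideanSpace ℝ (Fin n))‖ ≤ 1 := mem_closedBall_zero_iff.1 y.2
  rcases hy.lt_or_eq with hy | hy
  · exact cw.mem_skel.2 ⟨n, n.lt_succ_self, i, y, hy, rfl⟩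
  · exact cw.skel_mono n.le_succ (cw.boundary_mem_skel i y hy)

/-- The radial retraction of `ℝⁿ` onto the disk. -/
noncomputable def toDisk (n : ℕ) : C(EuclideanSpace ℝ (Fin n), Disk n) where
  toFun y := ⟨(max ‖y‖ 1)⁻¹ • y, by
    have h0 : 0 ≤ max ‖y‖ 1 := le_max_of_le_right zero_le_one
    rw [mem_closedBall_zero_iff, norm_smul, norm_inv, Real.norm_of_nonneg h0]
    exact inv_mul_le_one_of_le₀ (le_max_left _ _) h0⟩
  continuous_toFun := by
    have hmax : ∀ y : EuclideanSpace ℝ (Fin n), max ‖y‖ 1 ≠ 0 := fun y =>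
      (lt_max_of_lt_right (by norm_num)).ne'
    fun_prop (disch := exact hmax _)

lemma toDisk_of_le {n : ℕ} {y : EuclideanSpace ℝ (Fin n)} (hy : ‖y‖ ≤ 1) :
    (toDisk n y : EuclideanSpace ℝ (Fin n)) = y := by
  simp [toDisk, max_eq_right hy]

lemma toDisk_of_ge {n : ℕ} {y : EuclideanSpace ℝ (Fin n)} (hy : 1 ≤ ‖y‖) :
    ‖(toDisk n y : EuclideanSpace ℝ (Fin n))‖ = 1 := by
  have : ‖y‖ ≠ 0 := by linarith
  simp [toDisk, max_eq_left hy, norm_smul, this]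

/-- The `n`-cells are attached one at a time. -/
lemma cellAttach {n : ℕ} {T : Set (cw.cell n)} {i : cw.cell n} (hi : i ∉ T)
    (hc : IsCompact (cw.skel n ∪ ⋃ j ∈ T, cw.openCell n j)) :
    CellAttach (cw.skel n ∪ ⋃ j ∈ T, cw.openCell n j)
      (cw.skel n ∪ ⋃ j ∈ insert i T, cw.openCell n j) (fun y => cw.attach n i (toDisk n y)) where
  cont := by fun_prop
  compact := hc
  boundary y hy := Or.inl (cw.boundary_mem_skel i _ (toDisk_of_ge hy))
  interior y hy := by
    have hmem : cw.attach n i (toDisk n y) ∈ cw.openCell n i :=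
      ⟨toDisk n y, by simpa [toDisk_of_le hy.le] using hy, rfl⟩
    rintro (h | h)
    · obtain ⟨k, hk, j, hj⟩ := cw.mem_skel.1 h
      refine Set.disjoint_left.1 (cw.pairwiseDisjoint n i k j ?_) hmem hj
      rintro ⟨⟩
      exact hk.false
    · simp only [Set.mem_iUnion] at h
      obtain ⟨j, hjT, hj⟩ := h
      refine Set.disjoint_left.1 (cw.pairwiseDisjoint n i n j ?_) hmem hj
      rintro ⟨⟩
      exact hi hjT
  inj y z hy hz h := by
    have := (cw.isEmbedding_interior n i).injective
      (a₁ := ⟨toDisk n y, by rwa [toDisk_of_le hy.le]⟩)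
      (a₂ := ⟨toDisk n z, by rwa [toDisk_of_le hz.le]⟩) h
    have := congrArg (fun t => ((t.1 : Disk n) : EuclideanSpace ℝ (Fin n))) this
    simpa [toDisk_of_le hy.le, toDisk_of_le hz.le] using this
  eq := by
    rw [Set.biUnion_insert, Set.union_left_comm, Set.union_comm]
    congr 1
    ext x
    constructor
    · rintro ⟨y, hy, rfl⟩
      exact ⟨y, by simpa using hy, congrArg _ (Subtype.ext (toDisk_of_le (le_of_lt hy)))⟩
    · rintro ⟨y, hy, rfl⟩
      rw [mem_ball_zero_iff] at hy
      exact ⟨toDisk n y, by simpa [toDisk_of_le hy.le] using hy, rfl⟩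

lemma skel_succ (n : ℕ) :
    cw.skel (n + 1) = cw.skel n ∪ ⋃ j ∈ (Set.univ : Set (cw.cell n)), cw.openCell n j := by
  ext x
  simp only [mem_skel, Set.mem_union, Set.mem_univ, Set.iUnion_true, Set.mem_iUnion,
    Nat.lt_succ_iff_lt_or_eq, or_and_right, exists_or, exists_eq_left]

/-- A property of compact sets that survives the attachment of cells of dimension `≥ a` passes
from `skel a` to the later skeleta. -/
lemma skel_induction (hft : ∀ n, Finite (cw.cell n)) {P : Set L → Prop} {a : ℕ}
    (ha : IsCompact (cw.skel a)) (h0 : P (cw.skel a))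
    (hs : ∀ n, a ≤ n → ∀ (C' C : Set L) (χ : EuclideanSpace ℝ (Fin n) → L),
      CellAttach C' C χ → P C' → P C) {b : ℕ} (hb : a ≤ b) :
    IsCompact (cw.skel b) ∧ P (cw.skel b) := by
  induction b, hb using Nat.le_induction with
  | base => exact ⟨ha, h0⟩
  | succ n hn ih =>
    rw [skel_succ]
    refine Set.Finite.induction_on (motive := fun T _ =>
      IsCompact (cw.skel n ∪ ⋃ j ∈ T, cw.openCell n j) ∧
        P (cw.skel n ∪ ⋃ j ∈ T, cw.openCell n j)) _ Set.finite_univ (by simpa using ih) ?_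
    intro i T hi _ ihT
    have := cw.cellAttach hi ihT.1
    exact ⟨this.compact', hs n hn _ _ _ this ihT.2⟩

lemma isCompact_skel (hft : ∀ n, Finite (cw.cell n)) (n : ℕ) : IsCompact (cw.skel n) :=
  (cw.skel_induction hft (P := fun _ => True) (by simp [skel]) trivial
    (fun _ _ _ _ _ _ _ => trivial) n.zero_le).1

lemma isNR_skel [T2Space L] [Nonempty L] (hft : ∀ n, Finite (cw.cell n)) (n : ℕ) :
    IsNR (cw.skel n) :=
  (cw.skel_induction hft (P := IsNR) (a := 0) (by simp [skel])
    (by simpa [skel] using isNR_empty) (fun _ _ _ _ _ h => h.isNR) n.zero_le).2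

/-- Compact subsets lie in a skeleton: otherwise there are points `x n ∉ skel n` of the compact
set, and by the weak topology every set of such points is closed. -/
lemma exists_subset_skel [T2Space L] {A : Set L} (hA : IsCompact A) : ∃ n, A ⊆ cw.skel n := by
  by_contra! hcon
  have hcon : ∀ n, ∃ x ∈ A, x ∉ cw.skel n := fun n => Set.not_subset.1 (hcon n)
  choose x hxA hx using hcon
  have hcl : ∀ N, IsClosed (x '' Set.Ici N) := by
    intro N
    refine cw.weakTopology _ fun n i => ?_
    have : cw.attach n i ⁻¹' (x '' Set.Ici N) =
        cw.attach n i ⁻¹' (x '' (Set.Ici N ∩ Set.Iic n)) := by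
      apply subset_antisymm
      · rintro y ⟨m, hm, hmy⟩
        refine ⟨m, ⟨hm, ?_⟩, hmy⟩
        by_contra hlt
        refine hx m ?_
        rw [hmy]
        exact cw.skel_mono (Nat.succ_le_of_lt (not_le.1 hlt)) (cw.attach_mem_skel i y)
      · gcongr; exact Set.inter_subset_left
    rw [this]
    refine IsClosed.preimage (cw.attach n i).continuous (Set.Finite.isClosed ?_)
    exact ((Set.finite_Iic n).inter_of_right _).image x
  obtain ⟨z, hz⟩ := IsCompact.nonempty_iInter_of_sequence_nonempty_isCompact_isClosed
    (fun N => x '' Set.Ici N) (fun N => Set.image_mono (Set.Ici_subset_Ici.2 N.le_succ))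
    (fun N => ⟨x N, N, Set.self_mem_Ici, rfl⟩)
    (hA.of_isClosed_subset (hcl 0) (by rintro _ ⟨m, -, rfl⟩; exact hxA m)) hcl
  obtain ⟨k, hk⟩ := cw.exists_mem_skel z
  obtain ⟨m, hm, rfl⟩ := Set.mem_iInter.1 hz k
  exact hx m (cw.skel_mono hm hk)

/-- If `L ∈ AE(X)` and `S² ∈ AE(X)` then all skeleta of `L` of dimension at least `2` are
absolute extensors of `X` as well. -/
lemma isAE_skel [T2Space L] (hft : ∀ n, Finite (cw.cell n)) {X : Type*} [TopologicalSpace X]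
    [CompactSpace X] [NormalSpace X] (hL : IsAE L X) (hS : IsAE (Sphere 2) X) {n : ℕ}
    (hn : 3 ≤ n) : IsAE (cw.skel n) X := by
  intro A hA f
  obtain ⟨F, hF⟩ := hL A hA ⟨fun a => f a, by fun_prop⟩
  obtain ⟨N, hN⟩ := cw.exists_subset_skel (isCompact_range F.continuous)
  have key := (cw.skel_induction hft (a := n) (b := max n N)
    (P := fun C => cw.skel n ⊆ C ∧ ∀ G : X → L, Continuous G → (∀ x, G x ∈ C) →
      ∃ G' : X → L, Continuous G' ∧ (∀ x, G' x ∈ cw.skel n) ∧ ∀ x, G x ∈ cw.skel n → G' x = G x)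
    (cw.isCompact_skel hft n) ⟨subset_rfl, fun G hG hGC => ⟨G, hG, hGC, fun _ _ => rfl⟩⟩ ?_
    (le_max_left _ _)).2.2 F F.continuous
      fun x => cw.skel_mono (le_max_right _ _) (hN (Set.mem_range_self x))
  · obtain ⟨G, hG, hGs, hGF⟩ := key
    refine ⟨⟨fun x => ⟨G x, hGs x⟩, by fun_prop⟩, fun a => Subtype.ext ?_⟩
    have : F a = f a := hF a
    change G a = f a
    rw [← this]
    exact hGF _ (this ▸ (f a).2)
  · rintro k hk C' C χ h ⟨hsub, hpush⟩
    refine ⟨hsub.trans h.subset, fun G hG hGC => ?_⟩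
    obtain ⟨m, rfl⟩ : ∃ m, k = m + 1 := ⟨k - 1, by omega⟩
    obtain ⟨G1, hG1, hG1C, hG1G⟩ := h.push (isAE_sphere_of_le hS (by omega)) hG hGC
    obtain ⟨G2, hG2, hG2C, hG2G⟩ := hpush G1 hG1 hG1C
    refine ⟨G2, hG2, hG2C, fun x hx => ?_⟩
    have h1 := hG1G x (hsub hx)
    rw [hG2G x (h1 ▸ hx), h1]

end CWStructure

/-! ### Compact neighbourhood retracts of Euclidean spaces -/

/-- `R` is a nonempty compact subset of `ℝ^N` and the continuous self-map `ρ` of `ℝ^N` retracts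
the closed `δ`-neighbourhood of `R` onto `R`. -/
structure IsTarget {N : ℕ} (R : Set (Fin N → ℝ)) (δ : ℝ) (ρ : (Fin N → ℝ) → (Fin N → ℝ)) :
    Prop where
  compact : IsCompact R
  nonempty : R.Nonempty
  pos : 0 < δ
  cont : Continuous ρ
  mem : ∀ x, infDist x R ≤ δ → ρ x ∈ R
  eq : ∀ x ∈ R, ρ x = x

lemma IsNR.exists_target {L : Type*} [TopologicalSpace L] {C : Set L} (h : IsNR C)
    (hC : IsCompact C) (hne : C.Nonempty) :
    ∃ (N : ℕ) (R : Set (Fin N → ℝ)) (δ : ℝ) (ρ : (Fin N → ℝ) → (Fin N → ℝ)),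
      IsTarget R δ ρ ∧ Nonempty (C ≃ₜ R) := by
  obtain ⟨E, _, _, _, ι, U, r, hι, hU, hιU, hr, hrC, hrι⟩ := h
  let e : E ≃L[ℝ] (Fin (Module.finrank ℝ E) → ℝ) := (Module.finBasis ℝ E).equivFunL
  let R : Set (Fin (Module.finrank ℝ E) → ℝ) := (fun c => e (ι c)) '' C
  have heι : ContinuousOn (fun c => e (ι c)) C := e.continuous.comp_continuousOn hι
  have hR : IsCompact R := hC.image_of_continuousOn heι
  have hRU : R ⊆ e.symm ⁻¹' U := by
    rintro _ ⟨c, hc, rfl⟩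
    simpa using hιU c hc
  obtain ⟨δ, hδ, hδU⟩ := hR.exists_cthickening_subset_open (hU.preimage e.symm.continuous) hRU
  have hRne : R.Nonempty := hne.image _
  replace hδU : (infDist · R) ⁻¹' Set.Iic δ ⊆ e.symm ⁻¹' U := fun x hx => hδU <| by
    rw [mem_cthickening_iff, ENNReal.le_ofReal_iff_toReal_le (infEDist_ne_top hRne) hδ.le]
    exact hx
  have hre : ContinuousOn (fun x => r (e.symm x)) (e.symm ⁻¹' U) :=
    hr.comp e.symm.continuous.continuousOn fun x hx => hx
  have hcont : ContinuousOn (fun x => e (ι (r (e.symm x)))) (e.symm ⁻¹' U) :=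
    heι.comp hre fun x hx => hrC _ hx
  obtain ⟨ρ, hρ, hρe⟩ := tietze_on
    (isClosed_Iic.preimage (continuous_infDist_pt R) : IsClosed ((infDist · R) ⁻¹' Set.Iic δ))
    (fun x => e (ι (r (e.symm x)))) (hcont.mono hδU)
  refine ⟨_, R, δ, ρ, ⟨hR, hRne, hδ, hρ, fun x hx => ?_, fun x hx => ?_⟩, ⟨?_⟩⟩
  · rw [hρe x hx]
    exact ⟨_, hrC _ (hδU hx), rfl⟩
  · rw [hρe x (by simp [infDist_zero_of_mem hx, hδ.le])]
    obtain ⟨c, hc, rfl⟩ := hx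
    simp [hrι c hc]
  · exact
    { toFun := fun c => ⟨e (ι c), c, c.2, rfl⟩
      invFun := fun x => ⟨r (e.symm x), hrC _ (hRU x.2)⟩
      left_inv := fun c => Subtype.ext (by simp [hrι c c.2])
      right_inv := by
        rintro ⟨_, c, hc, rfl⟩
        simp [hrι c hc]
      continuous_toFun :=
        (continuousOn_iff_continuous_domRestrict.1 heι).subtype_mk _
      continuous_invFun :=
        (continuousOn_iff_continuous_domRestrict.1 (hre.mono hRU)).subtype_mk _ }

lemma isNR_sphere (n : ℕ) : IsNR (sphere (0 : EuclideanSpace ℝ (Fin n)) 1) := by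
  refine ⟨EuclideanSpace ℝ (Fin n), inferInstance, inferInstance, inferInstance, id, {0}ᶜ,
    fun x => ‖x‖⁻¹ • x, continuousOn_id, isOpen_compl_singleton, ?_, ?_, ?_, ?_⟩
  · rintro c hc rfl
    simp at hc
  · have : ∀ x ∈ ({0}ᶜ : Set (EuclideanSpace ℝ (Fin n))), ‖x‖ ≠ 0 := fun x hx => by simpa using hx
    fun_prop (disch := assumption)
  · intro x hx
    have : ‖x‖ ≠ 0 := by simpa using hx
    simp [norm_smul, this]
  · intro c hc
    rw [mem_sphere_zero_iff_norm] at hc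
    simp [hc]

/-! ### A criterion for absolute extensors -/

/-- It suffices to solve extension problems approximately, for data from a dense set `D` of
functions: if `h` is close to `f` on `A`, the difference `f - h` has a small extension `k`,
and `ρ (h + k)` extends `f`. -/
lemma IsTarget.isAE_of_dense {N : ℕ} {R : Set (Fin N → ℝ)} {δ : ℝ}
    {ρ : (Fin N → ℝ) → (Fin N → ℝ)} (hT : IsTarget R δ ρ) {Y : Type*} [TopologicalSpace Y]
    [CompactSpace Y] [T2Space Y] {D : Set C(Y, ℝ)} (hD : Dense D)
    (hsolve : ∀ u : Fin N → C(Y, ℝ), (∀ i, u i ∈ D) → ∃ h : Y → (Fin N → ℝ), Continuous h ∧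
      (∀ y, h y ∈ R) ∧ ∀ y, infDist (fun i => u i y) R < δ → h y = ρ (fun i => u i y)) :
    IsAE R Y := by
  classical
  have hne := hT.nonempty
  have : Nonempty R := hne.to_subtype
  refine isAE_of_extend_on fun A hA f hf => ?_
  have hδ := hT.pos
  obtain ⟨g, hg, hgf⟩ := tietze_on hA (fun y => (f y : Fin N → ℝ))
    (continuous_subtype_val.comp_continuousOn hf)
  -- `ρ` is uniformly continuous near `R`
  obtain ⟨η, hη, hρη⟩ : ∃ η > 0, ∀ x ∈ R, ∀ z, dist z x < η → dist (ρ z) x ≤ δ := by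
    have huc : UniformContinuousOn ρ (cthickening 1 R) :=
      hT.compact.cthickening.uniformContinuousOn_of_continuous hT.cont.continuousOn
    obtain ⟨η, hη, h⟩ := Metric.uniformContinuousOn_iff.1 huc δ hδ
    refine ⟨min η 1, by positivity, fun x hx z hz => ?_⟩
    have := h z (mem_cthickening_of_dist_le z x 1 R hx (hz.le.trans (min_le_right _ _))) x
      (self_subset_cthickening R hx) (hz.trans_le (min_le_left _ _))
    rw [hT.eq x hx] at this
    exact this.le
  have happ : ∀ i, ∃ d ∈ D, dist (⟨fun y => g y i, by fun_prop⟩ : C(Y, ℝ)) d < min η δ :=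
    fun i => hD.exists_dist_lt _ (by positivity)
  choose u huD hu using happ
  have hug : ∀ y, dist (fun i => u i y) (g y) < min η δ := by
    intro y
    rw [dist_pi_lt_iff (by positivity)]
    intro i
    rw [dist_comm]
    exact (ContinuousMap.dist_apply_le_dist y).trans_lt (hu i)
  obtain ⟨h, hh, hhR, hhu⟩ := hsolve u huD
  have hhf : ∀ y ∈ A, ‖(f y : Fin N → ℝ) - h y‖ ≤ δ := by
    intro y hy
    have h1 := hug y
    rw [hgf y hy] at h1
    rw [hhu y ((infDist_le_dist_of_mem (f y).2).trans_lt (h1.trans_le (min_le_right _ _))),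
      norm_sub_rev, ← dist_eq_norm]
    exact hρη _ (f y).2 _ (h1.trans_le (min_le_left _ _))
  obtain ⟨k, hk, hkf, hkb⟩ := tietze_bound hA (fun y => (f y : Fin N → ℝ) - h y)
    ((continuous_subtype_val.comp_continuousOn hf).sub hh.continuousOn) hδ hhf
  have hmem : ∀ y, ρ (h y + k y) ∈ R := by
    intro y
    refine hT.mem _ ((infDist_le_dist_of_mem (hhR y)).trans ?_)
    simpa [dist_eq_norm] using hkb y
  refine ⟨fun y => ⟨ρ (h y + k y), hmem y⟩, ?_, fun y hy => Subtype.ext ?_⟩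
  · have := hT.cont
    fun_prop
  · simp [hkf y hy, hT.eq _ (f y).2]

/-! ### Countable families of functions closed under operations -/

/-- Countably many finitary operations generate a countable set. -/
lemma exists_countable_closed {ι C : Type*} [Countable ι] (ar : ι → ℕ)
    (op : ∀ a, (Fin (ar a) → C) → C) :
    ∃ D : Set C, D.Countable ∧ ∀ a (u : Fin (ar a) → C), (∀ i, u i ∈ D) → op a u ∈ D := by
  let := Encodable.ofCountable ι
  let ev : WType (fun a : ι => Fin (ar a)) → C := WType.elim C fun x => op x.1 x.2
  refine ⟨Set.range ev, Set.countable_range ev, fun a u hu => ?_⟩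
  choose t ht using hu
  refine ⟨WType.mk a t, ?_⟩
  simp only [ev, WType.elim] at ht ⊢
  congr 1
  funext i
  exact ht i

open BoundedContinuousFunction in
/-- A countable ring of bounded functions on `S` that contains given functions `e k` and the
rational constants, and in which the extension problems for countably many targets are
solvable. -/
lemma exists_countable_ring {J S : Type*} [Countable J] [TopologicalSpace S] {N : J → ℕ}
    (H : ∀ j, (Fin (N j) → S →ᵇ ℝ) → Fin (N j) → S →ᵇ ℝ) (e : ℕ → S →ᵇ ℝ) :
    ∃ D : Set (S →ᵇ ℝ), D.Countable ∧ (∀ k, e k ∈ D) ∧ (∀ q : ℚ, const S (q : ℝ) ∈ D) ∧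
      (∀ a ∈ D, ∀ b ∈ D, a + b ∈ D) ∧ (∀ a ∈ D, ∀ b ∈ D, a * b ∈ D) ∧
      ∀ j u, (∀ i, u i ∈ D) → ∀ i, H j u i ∈ D := by
  obtain ⟨D, hD, hop⟩ := exists_countable_closed (C := S →ᵇ ℝ)
    (ι := ℕ ⊕ ℚ ⊕ Bool ⊕ (Σ j, Fin (N j)))
    (fun a => match a with
      | .inl _ => 0
      | .inr (.inl _) => 0
      | .inr (.inr (.inl _)) => 2
      | .inr (.inr (.inr p)) => N p.1)
    (fun a => match a with
      | .inl k => fun _ => e k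
      | .inr (.inl q) => fun _ => const S (q : ℝ)
      | .inr (.inr (.inl true)) => fun u => u 0 + u 1
      | .inr (.inr (.inl false)) => fun u => u 0 * u 1
      | .inr (.inr (.inr p)) => fun u => H p.1 u p.2)
  refine ⟨D, hD, fun k => hop (.inl k) Fin.elim0 fun i => i.elim0,
    fun q => hop (.inr (.inl q)) Fin.elim0 fun i => i.elim0, fun a ha b hb => ?_,
    fun a ha b hb => ?_, fun j u hu i => hop (.inr (.inr (.inr ⟨j, i⟩))) u hu⟩
  · exact hop (.inr (.inr (.inl true))) ![a, b] (Fin.forall_fin_two.2 ⟨ha, hb⟩)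
  · exact hop (.inr (.inr (.inl false))) ![a, b] (Fin.forall_fin_two.2 ⟨ha, hb⟩)

/-- A form of the Stone–Weierstrass theorem: rings of functions containing the
rational constants and separating points are dense. -/
lemma dense_of_separates {Y : Type*} [TopologicalSpace Y] [CompactSpace Y] {D : Set C(Y, ℝ)}
    (hq : ∀ q : ℚ, ContinuousMap.const Y (q : ℝ) ∈ D) (hadd : ∀ a ∈ D, ∀ b ∈ D, a + b ∈ D)
    (hmul : ∀ a ∈ D, ∀ b ∈ D, a * b ∈ D)
    (hsep : ∀ x y : Y, x ≠ y → ∃ d ∈ D, d x ≠ d y) : Dense D := by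
  let A : Subalgebra ℝ C(Y, ℝ) :=
    { carrier := closure D
      mul_mem' := fun ha hb => map_mem_closure₂ continuous_mul ha hb hmul
      add_mem' := fun ha hb => map_mem_closure₂ continuous_add ha hb hadd
      algebraMap_mem' := fun c => by
        have hc : Continuous fun c : ℝ => ContinuousMap.const Y c := ContinuousMap.continuous_const'
        have := map_mem_closure hc (Rat.denseRange_cast (𝕜 := ℝ) c) (t := D)
          (by rintro _ ⟨q, rfl⟩; exact hq q)
        exact this }
  have hA := ContinuousMap.subalgebra_topologicalClosure_eq_top_of_separatesPoints A (by
    intro x y hxy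
    obtain ⟨d, hd, hne⟩ := hsep x y hxy
    exact ⟨d, ⟨d, subset_closure hd, rfl⟩, hne⟩)
  intro f
  have hf : f ∈ A.topologicalClosure := hA ▸ Algebra.mem_top
  have hf : f ∈ closure (closure D) := hf
  rwa [closure_closure] at hf

/-! ### The universal space -/

open BoundedContinuousFunction in
/-- For countably many targets `R j`, the compact metrizable spaces `X` with `R j ∈ AE(X)` for
all `j` have a universal member. -/
lemma exists_universal {J : Type} [Countable J] {N : J → ℕ} {R : ∀ j, Set (Fin (N j) → ℝ)}
    {δ : J → ℝ} {ρ : ∀ j, (Fin (N j) → ℝ) → (Fin (N j) → ℝ)}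
    (hT : ∀ j, IsTarget (R j) (δ j) (ρ j)) :
    ∃ (Y : Type) (_ : TopologicalSpace Y) (_ : CompactSpace Y) (_ : MetrizableSpace Y),
      (∀ j, IsAE (R j) Y) ∧
        ∀ (X : Type) [TopologicalSpace X] [CompactSpace X] [MetrizableSpace X],
          (∀ j, IsAE (R j) X) → ∃ e : X → Y, Topology.IsEmbedding e := by
  -- the disjoint union of all members of the class that are closed subsets of the Hilbert cube
  let S : Type := Σ C : {C : Set HilbertCube // IsClosed C ∧ ∀ j, IsAE (R j) C}, C.1
  have hsolve : ∀ j (u : Fin (N j) → S →ᵇ ℝ), ∃ h : Fin (N j) → S →ᵇ ℝ,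
      (∀ s, (fun i => h i s) ∈ R j) ∧
        ∀ s, infDist (fun i => u i s) (R j) ≤ δ j → (fun i => h i s) = ρ j fun i => u i s := by
    intro j u
    have hC : ∀ C : {C : Set HilbertCube // IsClosed C ∧ ∀ j, IsAE (R j) C},
        ∃ G : C.1 → (Fin (N j) → ℝ), Continuous G ∧ (∀ x, G x ∈ R j) ∧
          ∀ x, infDist (fun i => u i ⟨C, x⟩) (R j) ≤ δ j → G x = ρ j fun i => u i ⟨C, x⟩ := by
      intro C
      have huc : Continuous fun (x : C.1) (i : Fin (N j)) => u i (⟨C, x⟩ : S) :=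
        continuous_pi fun i => (u i).continuous.comp continuous_sigmaMk
      obtain ⟨G, hG, hGR, hGu⟩ := IsAE.extend_into (C.2.2 j)
        (B := {x | infDist (fun i => u i (⟨C, x⟩ : S)) (R j) ≤ δ j})
        (isClosed_le ((continuous_infDist_pt _).comp huc) continuous_const)
        (fun x => ρ j fun i => u i ⟨C, x⟩) ((hT j).cont.comp huc).continuousOn
        (fun x hx => (hT j).mem _ hx)
      exact ⟨G, hG, hGR, hGu⟩
    choose G hG hGR hGu using hC
    obtain ⟨M, hM⟩ := (hT j).compact.isBounded.exists_norm_le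
    refine ⟨fun i => ofNormedAddCommGroup (fun s : S => G s.1 s.2 i)
      (continuous_sigma fun C => (continuous_apply i).comp (hG C)) M
      fun s => (norm_le_pi_norm _ i).trans (hM _ (hGR s.1 s.2)), fun s => hGR s.1 s.2,
      fun s hs => hGu s.1 s.2 hs⟩
  choose H hHR hHu using hsolve
  let ev : ℕ → S →ᵇ ℝ := fun k => ofNormedAddCommGroup (fun s : S => ((s.2 : HilbertCube) k : ℝ))
    (continuous_sigma fun C =>
      continuous_subtype_val.comp ((continuous_apply k).comp continuous_subtype_val)) 1
    (fun s => by
      rw [Real.norm_eq_abs, abs_of_nonneg (unitInterval.nonneg _)]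
      exact unitInterval.le_one _)
  obtain ⟨D, hDc, hev, hDq, hDadd, hDmul, hDH⟩ := exists_countable_ring H ev
  have : Countable D := hDc.to_subtype
  let Φ : S → (D → ℝ) := fun s d => d.1 s
  have hΦ : Continuous Φ := by fun_prop
  let Y : Set (D → ℝ) := closure (Set.range Φ)
  have hYc : IsCompact Y := by
    refine (isCompact_univ_pi fun d : D => isCompact_closedBall (0 : ℝ) ‖d.1‖).of_isClosed_subset
      isClosed_closure (closure_minimal ?_ (isClosed_set_pi fun d _ => isClosed_closedBall))
    rintro _ ⟨s, rfl⟩ d -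
    simpa [Φ] using d.1.norm_coe_le_norm s
  have : CompactSpace Y := isCompact_iff_compactSpace.1 hYc
  -- closed conditions pass from `S` to `Y`
  have hY : ∀ T : Set (D → ℝ), IsClosed T → (∀ s, Φ s ∈ T) → ∀ y : Y, y.1 ∈ T :=
    fun T hTc hTs y => closure_minimal (by rintro _ ⟨s, rfl⟩; exact hTs s) hTc y.2
  let π : D → C(Y, ℝ) := fun d =>
    ⟨fun y => y.1 d, (continuous_apply d).comp continuous_subtype_val⟩
  have hdense : Dense (Set.range π) := by
    apply dense_of_separates
    · intro q
      refine ⟨⟨_, hDq q⟩, ContinuousMap.ext fun y => ?_⟩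
      exact hY {z | z ⟨_, hDq q⟩ = q} (isClosed_eq (by fun_prop) (by fun_prop)) (fun s => rfl) y
    · rintro _ ⟨a, rfl⟩ _ ⟨b, rfl⟩
      refine ⟨⟨_, hDadd a a.2 b b.2⟩, ContinuousMap.ext fun y => ?_⟩
      exact hY {z | z ⟨_, hDadd a a.2 b b.2⟩ = z a + z b}
        (isClosed_eq (by fun_prop) (by fun_prop)) (fun s => rfl) y
    · rintro _ ⟨a, rfl⟩ _ ⟨b, rfl⟩
      refine ⟨⟨_, hDmul a a.2 b b.2⟩, ContinuousMap.ext fun y => ?_⟩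
      exact hY {z | z ⟨_, hDmul a a.2 b b.2⟩ = z a * z b}
        (isClosed_eq (by fun_prop) (by fun_prop)) (fun s => rfl) y
    · intro x y hxy
      obtain ⟨d, hd⟩ := Function.ne_iff.1 (Subtype.coe_ne_coe.2 hxy)
      exact ⟨π d, ⟨d, rfl⟩, hd⟩
  refine ⟨Y, inferInstance, inferInstance, inferInstance, fun j => ?_, fun X _ _ _ hX => ?_⟩
  · refine (hT j).isAE_of_dense hdense fun u hu => ?_
    choose d hd using hu
    obtain rfl : (fun i => π (d i)) = u := funext hd
    have hmem := hDH j (fun i => (d i).1) fun i => (d i).2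
    let h : (D → ℝ) → (Fin (N j) → ℝ) := fun z i => z ⟨_, hmem i⟩
    have hh : Continuous h := by fun_prop
    refine ⟨fun y => h y.1, by fun_prop, fun y => ?_, fun y hy => ?_⟩
    · exact hY (h ⁻¹' R j) ((hT j).compact.isClosed.preimage hh)
        (fun s => hHR j (fun i => (d i).1) s) y
    · have hρ := (hT j).cont
      -- the required equation, written as a closed condition
      have hcl := hY {z | max 0 (δ j - infDist (fun i => z (d i)) (R j)) •
          (h z - ρ j fun i => z (d i)) = 0} ?_ ?_ y
      · have hpos : 0 < δ j - infDist (fun i => y.1 (d i)) (R j) := sub_pos.2 hy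
        rcases smul_eq_zero.1 hcl with h0 | h0
        · rw [max_eq_right hpos.le] at h0
          exact absurd h0 hpos.ne'
        · exact sub_eq_zero.1 h0
      · have hid : Continuous fun z : D → ℝ => infDist (fun i => z (d i)) (R j) :=
          (continuous_infDist_pt _).comp (by fun_prop)
        exact isClosed_eq (by fun_prop) continuous_const
      · intro s
        rcases le_total (infDist (fun i => (d i).1 s) (R j)) (δ j) with hs | hs
        · have := hHu j (fun i => (d i).1) s hs
          refine smul_eq_zero.2 (Or.inr (sub_eq_zero.2 this))
        · exact smul_eq_zero.2 (Or.inl (max_eq_left (sub_nonpos.2 hs)))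
  · let := TopologicalSpace.metrizableSpaceMetric X
    obtain ⟨e, he⟩ := Metric.PiNatEmbed.exists_embedding_to_hilbert_cube (X := X)
    let C : {C : Set HilbertCube // IsClosed C ∧ ∀ j, IsAE (R j) C} :=
      ⟨Set.range e, (isCompact_range he.continuous).isClosed,
        fun j => (hX j).of_homeomorph he.toHomeomorph⟩
    let f : X → Y := fun x => ⟨Φ ⟨C, e x, x, rfl⟩, subset_closure ⟨_, rfl⟩⟩
    refine ⟨f, (Continuous.isClosedEmbedding ?_ ?_).isEmbedding⟩
    · refine Continuous.subtype_mk (hΦ.comp (continuous_sigmaMk.comp ?_)) _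
      exact he.continuous.subtype_mk _
    · intro x x' hxx'
      refine he.injective (funext fun k => Subtype.ext ?_)
      exact congrFun (congrArg Subtype.val hxx') ⟨ev k, hev k⟩

/-- If `L` is a CW complex of finite type with finite fundamental group
which is not homotopy dominated by a finite CW complex and `K = L ∨ S²`, then the class of
compact metrizable spaces `X` with `K ∈ AE(X)` has a universal space. -/
theorem universal_space_exists_for_wedge_with_sphere_two
    (L : Type) [TopologicalSpace L] [T2Space L] (cwL : CWStructure.{0, 0} L)
    (hft : ∀ n, Finite (cwL.cell n))
    (hπ : ∀ x : L, Finite (FundamentalGroup L x))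
    (hnd : ¬ DominatedByFiniteCW L)
    (K : Type) [TopologicalSpace K] [T2Space K] (cwK : CWStructure.{0, 0} K)
    (hK : IsWedgeOf K L (Sphere 2)) :
    ∃ (Y : Type) (_ : TopologicalSpace Y) (_ : CompactSpace Y) (_ : MetrizableSpace Y),
      IsAE K Y ∧
        ∀ (X : Type) [TopologicalSpace X] [CompactSpace X] [MetrizableSpace X],
          IsAE K X → ∃ e : X → Y, Topology.IsEmbedding e := by
  obtain ⟨P, Q, hP, hQ, hPQ, ⟨p, hp⟩, ⟨eP⟩, ⟨eQ⟩⟩ := hK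
  have hpP : p ∈ P := (hp.symm.subset rfl).1
  let x₀ : L := eP ⟨p, hpP⟩
  have : Nonempty L := ⟨x₀⟩
  obtain ⟨n₀, hn₀⟩ := cwL.exists_mem_skel x₀
  -- the targets: `S²`, and the skeleta of large dimension
  have htS := (isNR_sphere (2 + 1)).exists_target (isCompact_sphere _ _)
    (NormedSpace.sphere_nonempty.mpr zero_le_one)
  have htL := fun n => (cwL.isNR_skel hft (n₀ + 3 + n)).exists_target
    (cwL.isCompact_skel hft _) ⟨x₀, cwL.skel_mono (by omega) hn₀⟩
  obtain ⟨NS, RS, δS, ρS, hS, ⟨eS⟩⟩ := htS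
  choose NL RL δL ρL hL eL using htL
  have eL := fun n => (eL n).some
  obtain ⟨Y, _, _, _, hAE, hemb⟩ := exists_universal (J := Option ℕ)
    (N := fun j => j.elim NS NL) (R := fun j => j.rec RS RL) (δ := fun j => j.elim δS δL)
    (ρ := fun j => j.rec ρS ρL) (fun j => by cases j; exacts [hS, hL _])
  refine ⟨Y, inferInstance, inferInstance, inferInstance, ?_, fun X _ _ _ hX => hemb X ?_⟩
  · have hYS : IsAE RS Y := hAE none
    have hYL : ∀ n, IsAE (RL n) Y := fun n => hAE (some n)
    have h1 : IsAE Q Y := (hYS.of_target_homeomorph eS).of_target_homeomorph eQ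
    have h2 : IsAE L Y := by
      intro A hA f
      have : CompactSpace A := isCompact_iff_compactSpace.1 hA.isCompact
      obtain ⟨n, hn⟩ := cwL.exists_subset_skel (isCompact_range f.continuous)
      have hn : ∀ a, f a ∈ cwL.skel (n₀ + 3 + n) := fun a =>
        cwL.skel_mono (by omega) (hn ⟨a, rfl⟩)
      obtain ⟨F, hF⟩ := (hYL n).of_target_homeomorph (eL n) A hA
        ⟨fun a => ⟨f a, hn a⟩, by fun_prop⟩
      exact ⟨⟨fun y => F y, by fun_prop⟩, fun a => congrArg Subtype.val (hF a)⟩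
    exact isAE_of_wedge hP hQ hPQ hp (h2.of_target_homeomorph eP) h1
  · obtain ⟨rP, hrP⟩ := exists_wedge_retraction hP hQ hPQ hp
    obtain ⟨rQ, hrQ⟩ := exists_wedge_retraction hQ hP (Set.union_comm P Q ▸ hPQ)
      (Set.inter_comm P Q ▸ hp)
    have h1 : IsAE L X := (hX.of_retract ⟨_, continuous_subtype_val⟩ rP hrP).of_target_homeomorph
      eP.symm
    have h2 : IsAE (Sphere 2) X :=
      (hX.of_retract ⟨_, continuous_subtype_val⟩ rQ hrQ).of_target_homeomorph eQ.symm
    rintro (_ | n)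
    · exact h2.of_target_homeomorph (S := RS) eS.symm
    · exact (cwL.isAE_skel hft h1 h2 (n := n₀ + 3 + n) (by omega)).of_target_homeomorph
        (S := RL n) (eL n).symm
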